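/- arXiv:1909.04441 — 2 statements merged into one kernel-verified Lean document; each statement's English description precedes it below -/
import Mathlib

section
/- In the polynomial ring ℤ[u, y, X], define the twisted factorial powers X^{(n)} := ∏_{i=0}^{n−1} (X + (i)_u·y). Then for all m, n ∈ ℕ one has the product formula X^{(n)}·X^{(m)} = Σ_{i=0}^{min(m,n)} (−1)^i · u^{i(i−1)/2} · C(m,i)_u · (∏_{j=n−i+1}^{n} (j)_u) · y^i · X^{(m+n−i)}. -/
/-- The `q`-integer `(n)_q = 1 + q + ⋯ + q^{n-1}`. -/
def qInt {S : Type*} [CommRing S] (q : S) (n : ℕ) : S :=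
  ∑ i ∈ Finset.range n, q ^ i

/-- The Gaussian binomial coefficient `C(n,k)_u ∈ ℤ[u]`. -/
noncomputable def gbinom : ℕ → ℕ → Polynomial ℤ
  | _, 0 => 1
  | 0, _ + 1 => 0
  | n + 1, k + 1 => Polynomial.X ^ (k + 1) * gbinom n (k + 1) + gbinom n k
  termination_by n _ => n

/- We work in `ℤ[u, y, X] = MvPolynomial (Fin 3) ℤ`, with `u` the variable `0`,
`y` the variable `1` and `X` the variable `2`. -/

/-- The variable `u`. -/
noncomputable def u : MvPolynomial (Fin 3) ℤ := MvPolynomial.X 0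
/-- The variable `y`. -/
noncomputable def y : MvPolynomial (Fin 3) ℤ := MvPolynomial.X 1
/-- The variable `X`. -/
noncomputable def Xv : MvPolynomial (Fin 3) ℤ := MvPolynomial.X 2

/-- The twisted factorial power `X^{(n)} = ∏_{i=0}^{n-1} (X + (i)_u·y)`. -/
noncomputable def twPow (n : ℕ) : MvPolynomial (Fin 3) ℤ :=
  ∏ i ∈ Finset.range n, (Xv + qInt u i * y)

/-!
Write `x^{(n)} = ∏_{i<n} (x + (i)_q t)` in any commutative ring and induct on `m`. From
`(m + k)_q = (m)_q + q^m (k)_q` one gets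
`x^{(m+n-i)} * (x + (m)_q t) = x^{(m+1+n-i)} - q^m (n-i)_q t x^{(m+n-i)}`,
so multiplication by the last factor of `x^{(m+1)}` turns the coefficients `a(m, i)` into
`a(m+1, i+1) = a(m, i+1) - q^m (n-i)_q t a(m, i)`. The coefficients of the formula satisfy this
recurrence by the second Pascal identity `C(m+1,k+1) = C(m,k+1) + q^{m-k} C(m,k)`.
-/

section QInt

variable {S : Type*} [CommRing S] (q : S)

@[simp]
theorem qInt_zero : qInt q 0 = 0 := Finset.sum_range_zero _

theorem qInt_add (m k : ℕ) : qInt q (m + k) = qInt q m + q ^ m * qInt q k := by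
  simp only [qInt, Finset.sum_range_add, Finset.mul_sum, pow_add]

/-- The descending `q`-factorial `(n)_q (n-1)_q ⋯ (n-i+1)_q`. For `i > n` the truncated subtraction
leaves a factor `(0)_q = 0`. -/
def qDescFactorial (n i : ℕ) : S :=
  ∏ j ∈ Finset.range i, qInt q (n - j)

@[simp]
theorem qDescFactorial_zero (n : ℕ) : qDescFactorial q n 0 = 1 := Finset.prod_range_zero _

theorem qDescFactorial_succ (n i : ℕ) :
    qDescFactorial q n (i + 1) = qDescFactorial q n i * qInt q (n - i) :=
  Finset.prod_range_succ _ _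

theorem qDescFactorial_eq_zero_of_lt {n i : ℕ} (h : n < i) : qDescFactorial q n i = 0 :=
  Finset.prod_eq_zero (Finset.mem_range.mpr h) (by rw [Nat.sub_self, qInt_zero])

theorem qDescFactorial_eq_prod_Ico {n i : ℕ} (h : i ≤ n) :
    qDescFactorial q n i = ∏ j ∈ Finset.Ico (n - i + 1) (n + 1), qInt q j := by
  rw [qDescFactorial, Finset.range_eq_Ico, Finset.prod_Ico_reflect _ _ (by omega)]
  congr 2
  omega

end QInt

section GaussianBinomial

open Polynomial

@[simp]
theorem gbinom_zero_right (n : ℕ) : gbinom n 0 = 1 := by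
  cases n <;> rw [gbinom]

@[simp]
theorem gbinom_zero_succ (k : ℕ) : gbinom 0 (k + 1) = 0 := by
  rw [gbinom]

theorem gbinom_succ_succ (n k : ℕ) :
    gbinom (n + 1) (k + 1) = X ^ (k + 1) * gbinom n (k + 1) + gbinom n k := by
  rw [gbinom]

theorem gbinom_eq_zero_of_lt : ∀ {n k : ℕ}, n < k → gbinom n k = 0
  | 0, k + 1, _ => gbinom_zero_succ k
  | n + 1, k + 1, h => by
    rw [gbinom_succ_succ, gbinom_eq_zero_of_lt (by omega : n < k + 1),
      gbinom_eq_zero_of_lt (by omega : n < k), mul_zero, add_zero]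

/-- The second Pascal identity `C(m+1,k+1) = C(m,k+1) + X^{m-k} C(m,k)`, multiplied by `X ^ k` to
avoid the truncated subtraction `m - k`. -/
theorem X_pow_mul_gbinom_succ_succ (m k : ℕ) :
    X ^ k * gbinom (m + 1) (k + 1) = X ^ k * gbinom m (k + 1) + X ^ m * gbinom m k := by
  induction m generalizing k with
  | zero => cases k <;> simp [gbinom_succ_succ]
  | succ m ih =>
    cases k with
    | zero =>
      have pascal := gbinom_succ_succ (m + 1) 0
      have pascal' := gbinom_succ_succ m 0
      have ih₀ := ih 0
      simp only [gbinom_zero_right] at pascal pascal' ih₀ ⊢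
      linear_combination pascal - pascal' + X * ih₀
    | succ k =>
      linear_combination X ^ (k + 1) * gbinom_succ_succ (m + 1) (k + 1)
        - X ^ (k + 1) * gbinom_succ_succ m (k + 1) - X ^ (m + 1) * gbinom_succ_succ m k
        + X ^ (k + 2) * ih (k + 1) + X * ih k

theorem pow_mul_aeval_gbinom_succ_succ {S : Type*} [CommRing S] (q : S) (m k : ℕ) :
    q ^ k * aeval q (gbinom (m + 1) (k + 1)) =
      q ^ k * aeval q (gbinom m (k + 1)) + q ^ m * aeval q (gbinom m k) := by
  simpa only [map_add, map_mul, map_pow, aeval_X] using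
    congrArg (aeval q) (X_pow_mul_gbinom_succ_succ m k)

end GaussianBinomial

section TwistedPower

variable {S : Type*} [CommRing S] (q t x : S)

/-- The twisted factorial power `x^{(n)} = ∏_{i=0}^{n-1} (x + (i)_q·t)` of an element `x` of a
commutative ring; `twPow` is the case of the variables `u`, `y`, `X` of `ℤ[u, y, X]`. -/
def twistedPow (n : ℕ) : S :=
  ∏ i ∈ Finset.range n, (x + qInt q i * t)

@[simp]
theorem twistedPow_zero : twistedPow q t x 0 = 1 := Finset.prod_range_zero _

theorem twistedPow_succ (n : ℕ) :
    twistedPow q t x (n + 1) = twistedPow q t x n * (x + qInt q n * t) :=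
  Finset.prod_range_succ _ _

theorem twistedPow_add_mul (m k : ℕ) :
    twistedPow q t x (m + k) * (x + qInt q m * t) =
      twistedPow q t x (m + k + 1) - q ^ m * qInt q k * t * twistedPow q t x (m + k) := by
  rw [twistedPow_succ, qInt_add]
  ring

/-- The structure constants of the twisted powers: `twistedCoeff q t m n i` is the coefficient of
`x^{(m+n-i)}` in the expansion of `x^{(n)} x^{(m)}`. -/
noncomputable def twistedCoeff (m n i : ℕ) : S :=
  (-1) ^ i * q ^ i.choose 2 * Polynomial.aeval q (gbinom m i) * qDescFactorial q n i * t ^ i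

@[simp]
theorem twistedCoeff_zero_right (m n : ℕ) : twistedCoeff q t m n 0 = 1 := by
  simp [twistedCoeff]

theorem twistedCoeff_eq_zero_of_lt_left {m i : ℕ} (n : ℕ) (h : m < i) :
    twistedCoeff q t m n i = 0 := by
  simp [twistedCoeff, gbinom_eq_zero_of_lt h]

theorem twistedCoeff_eq_zero_of_lt_right (m : ℕ) {n i : ℕ} (h : n < i) :
    twistedCoeff q t m n i = 0 := by
  simp [twistedCoeff, qDescFactorial_eq_zero_of_lt q h]

theorem twistedCoeff_succ_succ (m n i : ℕ) :
    twistedCoeff q t (m + 1) n (i + 1) =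
      twistedCoeff q t m n (i + 1) - q ^ m * qInt q (n - i) * t * twistedCoeff q t m n i := by
  have choose_two : (i + 1).choose 2 = i + i.choose 2 := by
    rw [Nat.choose_succ_succ' i 1, Nat.choose_one_right]
  simp only [twistedCoeff, qDescFactorial_succ, choose_two]
  linear_combination (-1) ^ (i + 1) * q ^ i.choose 2 * qDescFactorial q n i * qInt q (n - i) *
    t ^ (i + 1) * pow_mul_aeval_gbinom_succ_succ q m i

theorem twistedCoeff_mul_twistedPow_mul (m n i : ℕ) :
    twistedCoeff q t m n i * twistedPow q t x (m + n - i) * (x + qInt q m * t) =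
      twistedCoeff q t m n i * twistedPow q t x (m + 1 + n - i) -
        q ^ m * qInt q (n - i) * t * twistedCoeff q t m n i * twistedPow q t x (m + n - i) := by
  rcases lt_or_ge n i with hni | hin
  · simp [twistedCoeff_eq_zero_of_lt_right q t m hni]
  · obtain ⟨k, rfl⟩ := Nat.exists_eq_add_of_le hin
    rw [show m + (i + k) - i = m + k by omega, show m + 1 + (i + k) - i = m + k + 1 by omega,
      Nat.add_sub_cancel_left]
    linear_combination twistedCoeff q t m (i + k) i * twistedPow_add_mul q t x m k

theorem twistedPow_mul_twistedPow_eq_sum (m n : ℕ) :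
    twistedPow q t x n * twistedPow q t x m =
      ∑ i ∈ Finset.range (m + 1), twistedCoeff q t m n i * twistedPow q t x (m + n - i) := by
  induction m with
  | zero => simp
  | succ m ih =>
    let a := twistedCoeff q t m n
    let P := twistedPow q t x
    let d (i : ℕ) := q ^ m * qInt q (n - i) * t * a i
    have index_shift (i : ℕ) : m + 1 + n - (i + 1) = m + n - i := by omega
    have last_eq_zero : a (m + 1) = 0 := twistedCoeff_eq_zero_of_lt_left q t n m.lt_succ_self
    calc P n * P (m + 1)
        = ∑ i ∈ Finset.range (m + 1), a i * P (m + n - i) * (x + qInt q m * t) := by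
          rw [← Finset.sum_mul, ← ih, mul_assoc, ← twistedPow_succ]
      _ = ∑ i ∈ Finset.range (m + 1), a i * P (m + 1 + n - i) -
            ∑ i ∈ Finset.range (m + 1), d i * P (m + n - i) := by
          rw [← Finset.sum_sub_distrib]
          exact Finset.sum_congr rfl fun i _ => twistedCoeff_mul_twistedPow_mul q t x m n i
      _ = ∑ i ∈ Finset.range (m + 2), a i * P (m + 1 + n - i) -
            ∑ i ∈ Finset.range (m + 1), d i * P (m + n - i) := by
          rw [Finset.sum_range_succ _ (m + 1), last_eq_zero, zero_mul, add_zero]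
      _ = ∑ i ∈ Finset.range (m + 1), (a (i + 1) - d i) * P (m + n - i) + P (m + 1 + n) := by
          simp only [Finset.sum_range_succ' _ (m + 1), index_shift, sub_mul,
            Finset.sum_sub_distrib, a, twistedCoeff_zero_right, one_mul, Nat.sub_zero]
          ring
      _ = ∑ i ∈ Finset.range (m + 2), twistedCoeff q t (m + 1) n i * P (m + 1 + n - i) := by
          simp only [Finset.sum_range_succ' _ (m + 1), index_shift, twistedCoeff_succ_succ,
            twistedCoeff_zero_right, one_mul, Nat.sub_zero, a, d]

theorem twisted_power_product_formula_general (m n : ℕ) :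
    twistedPow q t x n * twistedPow q t x m =
      ∑ i ∈ Finset.range (min m n + 1),
        (-1) ^ i * q ^ (i * (i - 1) / 2) * Polynomial.aeval q (gbinom m i) *
          (∏ j ∈ Finset.Ico (n - i + 1) (n + 1), qInt q j) *
          t ^ i * twistedPow q t x (m + n - i) := by
  have range_subset : Finset.range (min m n + 1) ⊆ Finset.range (m + 1) :=
    Finset.range_subset_range.mpr (by omega)
  rw [twistedPow_mul_twistedPow_eq_sum, ← Finset.sum_subset range_subset]
  · refine Finset.sum_congr rfl fun i hi => ?_
    have hin : i ≤ n := by grind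
    rw [twistedCoeff, qDescFactorial_eq_prod_Ico q hin, Nat.choose_two_right]
  · intro i him himn
    have hni : n < i := by grind
    rw [twistedCoeff_eq_zero_of_lt_right q t m hni, zero_mul]

end TwistedPower

/-- the product formula
`X^{(n)}·X^{(m)} = Σ_{i=0}^{min(m,n)} (−1)^i·u^{i(i−1)/2}·C(m,i)_u·(∏_{j=n−i+1}^{n} (j)_u)·y^i·X^{(m+n−i)}`
in `ℤ[u, y, X]`. -/
theorem twisted_power_product_formula :
    ∀ m n : ℕ,
      twPow n * twPow m =
        ∑ i ∈ Finset.range (min m n + 1),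
          (-1 : MvPolynomial (Fin 3) ℤ) ^ i * u ^ (i * (i - 1) / 2) *
            Polynomial.aeval u (gbinom m i) *
            (∏ j ∈ Finset.Ico (n - i + 1) (n + 1), qInt u j) *
            y ^ i * twPow (m + n - i) :=
  twisted_power_product_formula_general u y Xv
end

section
/- Let A be a commutative ring and q, y ∈ A. On the free A-module P with basis (ξ^{[n]})_{n∈ℕ}, the A-bilinear multiplication determined on basis elements by ξ^{[n]}·ξ^{[m]} = Σ_{i=0}^{min(m,n)} (−1)^i · q^{i(i−1)/2} · C(m+n−i, m)_q · C(m,i)_q · y^i · ξ^{[m+n−i]} is associative and commutative with unit element ξ^{[0]}, so that P becomes a commutative unital A-algebra; moreover, for every n ∈ ℕ, the A-submodule spanned by {ξ^{[k]} : k > n} is an ideal of this algebra. -/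
/-- `C(n,k)_q`: the image of the Gaussian binomial coefficient under `u ↦ q`. -/
noncomputable def gbinomAt {S : Type*} [CommRing S] (q : S) (n k : ℕ) : S :=
  Polynomial.aeval q (gbinom n k)

/-- The product of the basis elements `ξ^{[n]}·ξ^{[m]}`, as an element of the free
`A`-module `ℕ →₀ A` (in which `Finsupp.single k 1` represents `ξ^{[k]}`):
`ξ^{[n]}·ξ^{[m]} = Σ_{i=0}^{min(m,n)} (−1)^i·q^{i(i−1)/2}·C(m+n−i,m)_q·C(m,i)_q·y^i·ξ^{[m+n−i]}`. -/
noncomputable def xiMul {A : Type*} [CommRing A] (q y : A) (n m : ℕ) : ℕ →₀ A :=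
  ∑ i ∈ Finset.range (min n m + 1),
    Finsupp.single (m + n - i)
      ((-1 : A) ^ i * q ^ (i * (i - 1) / 2) * gbinomAt q (m + n - i) m * gbinomAt q m i * y ^ i)

/-- The `A`-bilinear multiplication on the free `A`-module `ℕ →₀ A` determined on basis
elements by `xiMul`. -/
noncomputable def dpMul {A : Type*} [CommRing A] (q y : A) (f g : ℕ →₀ A) : ℕ →₀ A :=
  f.sum fun n a => g.sum fun m b => (a * b) • xiMul q y n m

section GaussianBinomial

open Finset Polynomial

variable {S : Type*} [CommRing S] (q : S)

@[simp]
theorem gbinomAt_zero_right (n : ℕ) : gbinomAt q n 0 = 1 := by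
  cases n <;> simp [gbinomAt, gbinom]

@[simp]
theorem gbinomAt_zero_succ (k : ℕ) : gbinomAt q 0 (k + 1) = 0 := by
  simp [gbinomAt, gbinom]

theorem gbinomAt_succ_succ (n k : ℕ) :
    gbinomAt q (n + 1) (k + 1) = q ^ (k + 1) * gbinomAt q n (k + 1) + gbinomAt q n k := by
  simp [gbinomAt, gbinom]

theorem gbinomAt_eq_zero_of_lt : ∀ {n k : ℕ}, n < k → gbinomAt q n k = 0
  | _, 0, h => absurd h (Nat.not_lt_zero _)
  | 0, k + 1, _ => gbinomAt_zero_succ q k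
  | n + 1, k + 1, h => by
    rw [gbinomAt_succ_succ, gbinomAt_eq_zero_of_lt (by lia : n < k + 1),
      gbinomAt_eq_zero_of_lt (by lia : n < k), mul_zero, add_zero]

@[simp]
theorem gbinomAt_self (n : ℕ) : gbinomAt q n n = 1 := by
  induction n with
  | zero => exact gbinomAt_zero_right q 0
  | succ n ih => simp [gbinomAt_succ_succ, gbinomAt_eq_zero_of_lt, ih]

theorem map_gbinomAt {T : Type*} [CommRing T] (φ : S →+* T) (n k : ℕ) :
    φ (gbinomAt q n k) = gbinomAt (φ q) n k :=
  (aeval_algHom_apply φ.toIntAlgHom q (gbinom n k)).symm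

theorem gbinomAt_add_mul_gbinomAt_add :
    ∀ m r j : ℕ, gbinomAt q (m + r) (m + j) * gbinomAt q (m + j) m =
      gbinomAt q (m + r) m * gbinomAt q r j
  | 0, r, j => by simp
  | m + 1, r, 0 => by simp
  | m + 1, 0, j + 1 => by simp [gbinomAt_eq_zero_of_lt]
  | m + 1, r + 1, j + 1 => by
    have pred_m := gbinomAt_add_mul_gbinomAt_add m (r + 1) (j + 1)
    have pred_r := gbinomAt_add_mul_gbinomAt_add (m + 1) r (j + 1)
    have pred_r_j := gbinomAt_add_mul_gbinomAt_add (m + 1) r j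
    simp only [← add_assoc, add_right_comm _ 1] at pred_m pred_r pred_r_j ⊢
    rw [gbinomAt_succ_succ q (m + r + 1) (m + j + 1), gbinomAt_succ_succ q (m + r + 1) m]
    linear_combination q ^ (m + j + 2) * pred_r + pred_m + q ^ (m + 1) * pred_r_j +
      gbinomAt q (m + r + 1) (m + j + 1) * gbinomAt_succ_succ q (m + j + 1) m -
      q ^ (m + 1) * gbinomAt q (m + r + 1) (m + 1) * gbinomAt_succ_succ q r j

theorem prod_one_add_C_pow_add_mul_X (k m : ℕ) :
    ∏ i ∈ range k, (1 + C (q ^ (i + m)) * X) =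
      (∏ i ∈ range k, (1 + C (q ^ i) * X)).comp (C (q ^ m) * X) := by
  simp [Polynomial.prod_comp, pow_add, mul_assoc]

theorem coeff_prod_one_add_C_pow_mul_X (k n : ℕ) :
    (∏ i ∈ range k, (1 + C (q ^ i) * X)).coeff n = q ^ n.choose 2 * gbinomAt q k n := by
  induction k generalizing n with
  | zero => cases n <;> simp [coeff_one]
  | succ k ih =>
    rw [prod_range_succ', prod_one_add_C_pow_add_mul_X, pow_one, pow_zero, map_one, one_mul,
      mul_add, mul_one]
    cases n with
    | zero => simp [-map_pow, ih]
    | succ n =>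
      simp only [coeff_add, coeff_mul_X, comp_C_mul_X_coeff, ih, gbinomAt_succ_succ,
        Nat.choose_succ_succ' n 1, Nat.choose_one_right]
      ring

/-- The `q`-Vandermonde identity, with the powers of `q` distributed so that both sides are
coefficients in `∏_{i<m+r} (1 + q^i X) = ∏_{i<m} (1 + q^i X) · ∏_{i<r} (1 + q^i (q^m X))`. -/
theorem pow_choose_two_mul_gbinomAt_add (m r n : ℕ) :
    q ^ n.choose 2 * gbinomAt q (m + r) n =
      ∑ ij ∈ antidiagonal n, (q ^ ij.1.choose 2 * gbinomAt q m ij.1) *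
        (q ^ ij.2.choose 2 * gbinomAt q r ij.2 * (q ^ m) ^ ij.2) := by
  rw [← coeff_prod_one_add_C_pow_mul_X, prod_range_add]
  simp only [add_comm m]
  rw [prod_one_add_C_pow_add_mul_X, coeff_mul]
  simp only [comp_C_mul_X_coeff, coeff_prod_one_add_C_pow_mul_X]

end GaussianBinomial

theorem add_choose_two (m n : ℕ) : (m + n).choose 2 = m.choose 2 + n.choose 2 + m * n := by
  induction n with
  | zero => simp
  | succ n ih =>
    rw [← add_assoc, Nat.choose_succ_succ' _ 1, Nat.choose_succ_succ' n 1, ih,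
      Nat.choose_one_right, Nat.choose_one_right]
    ring

section Multiplication

variable {A : Type*} [CommRing A] (q y : A)

/-- The multiplication `dpMul` bundled as a bilinear map. -/
noncomputable def dpMulₗ : (ℕ →₀ A) →ₗ[A] (ℕ →₀ A) →ₗ[A] (ℕ →₀ A) :=
  Finsupp.linearCombination A fun n => Finsupp.linearCombination A (xiMul q y n)

theorem dpMulₗ_apply (f g : ℕ →₀ A) : dpMulₗ q y f g = dpMul q y f g := by
  simp [dpMulₗ, dpMul, Finsupp.linearCombination_apply, Finsupp.sum, LinearMap.sum_apply,
    Finset.smul_sum, mul_smul]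

theorem dpMulₗ_single_single (n m : ℕ) (a b : A) :
    dpMulₗ q y (Finsupp.single n a) (Finsupp.single m b) = a • b • xiMul q y n m := by
  simp [dpMulₗ]

theorem xiMul_zero_left (n : ℕ) : xiMul q y 0 n = Finsupp.single n 1 := by
  simp [xiMul, -Finsupp.single_mul]

theorem xiMul_zero_right (n : ℕ) : xiMul q y n 0 = Finsupp.single n 1 := by
  simp [xiMul, -Finsupp.single_mul]

theorem single_zero_one_dpMul (f : ℕ →₀ A) : dpMul q y (Finsupp.single 0 1) f = f := by
  have mul_left_eq_id : dpMulₗ q y (Finsupp.single 0 1) = LinearMap.id := by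
    ext1 m; ext1
    simp [dpMulₗ_single_single, xiMul_zero_left]
  rw [← dpMulₗ_apply, mul_left_eq_id, LinearMap.id_apply]

theorem dpMul_single_zero_one (f : ℕ →₀ A) : dpMul q y f (Finsupp.single 0 1) = f := by
  have mul_right_eq_id : (dpMulₗ q y).flip (Finsupp.single 0 1) = LinearMap.id := by
    ext1 m; ext1
    simp [dpMulₗ_single_single, xiMul_zero_right]
  rw [← dpMulₗ_apply, ← LinearMap.flip_apply, mul_right_eq_id, LinearMap.id_apply]

theorem xiMul_mem_supported_Ici (n m : ℕ) : xiMul q y n m ∈ Finsupp.supported A A (Set.Ici m) := by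
  refine Submodule.sum_mem _ fun i hi => Finsupp.single_mem_supported A _ ?_
  rw [Finset.mem_range] at hi
  rw [Set.mem_Ici]
  lia

theorem dpMul_mem_supported {s : Set ℕ} (hs : IsUpperSet s) (f : ℕ →₀ A) {g : ℕ →₀ A}
    (hg : g ∈ Finsupp.supported A A s) : dpMul q y f g ∈ Finsupp.supported A A s :=
  Submodule.sum_mem _ fun n _ => Submodule.sum_mem _ fun m hm =>
    Submodule.smul_mem _ _ <|
      Finsupp.supported_mono (hs.Ici_subset (hg hm)) (xiMul_mem_supported_Ici q y n m)

theorem mapRange_xiMul {B : Type*} [CommRing B] (φ : A →+* B) (n m : ℕ) :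
    (xiMul q y n m).mapRange φ (map_zero φ) = xiMul (φ q) (φ y) n m := by
  simp [xiMul, Finsupp.mapRange_finsetSum, map_gbinomAt, -Finsupp.single_mul]

theorem mapRange_dpMul {B : Type*} [CommRing B] (φ : A →+* B) (f g : ℕ →₀ A) :
    (dpMul q y f g).mapRange φ (map_zero φ) =
      dpMul (φ q) (φ y) (f.mapRange φ (map_zero φ)) (g.mapRange φ (map_zero φ)) := by
  change Finsupp.mapRange.linearMap φ.toSemilinearMap _ = _
  unfold dpMul
  rw [Finsupp.sum_mapRange_index (by simp)]
  simp [Finsupp.sum_mapRange_index, map_finsuppSum, mapRange_xiMul]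

end Multiplication

section Evaluation

open Finset

variable {A : Type*} [CommRing A] (q y : A)

/-- The function `k ↦ (-y)^n q^{n(n-1)/2} C(k,n)_q`, which stands for `ξ^{[n]}` evaluated at the
points `ξ = -(k)_q y`. -/
noncomputable def xiVal (n k : ℕ) : A :=
  (-y) ^ n * q ^ n.choose 2 * gbinomAt q k n

theorem xiVal_eq_zero_of_lt {n k : ℕ} (h : k < n) : xiVal q y n k = 0 := by
  rw [xiVal, gbinomAt_eq_zero_of_lt q h, mul_zero]

theorem xiMul_eq_sum_antidiagonal (n m : ℕ) :
    xiMul q y n m = ∑ ij ∈ antidiagonal n, Finsupp.single (m + ij.2)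
      ((-1) ^ ij.1 * q ^ ij.1.choose 2 * gbinomAt q (m + ij.2) m * gbinomAt q m ij.1 *
        y ^ ij.1) := by
  rw [Nat.sum_antidiagonal_eq_sum_range_succ_mk]
  simp only [xiMul, ← Nat.choose_two_right]
  refine (sum_congr rfl fun i hi => ?_).trans
    (sum_subset (range_mono (by lia)) fun i hi hmin => ?_)
  · rw [mem_range] at hi
    rw [Nat.add_sub_assoc (by lia)]
  · simp only [mem_range] at hi hmin
    simp [gbinomAt_eq_zero_of_lt q (by lia : m < i), -Finsupp.single_mul]

theorem xiVal_mul_xiVal_apply (n m k : ℕ) :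
    xiVal q y n k * xiVal q y m k = ∑ ij ∈ antidiagonal n,
      ((-1) ^ ij.1 * q ^ ij.1.choose 2 * gbinomAt q (m + ij.2) m * gbinomAt q m ij.1 * y ^ ij.1) *
        xiVal q y (m + ij.2) k := by
  rcases lt_or_ge k m with hk | hk
  · rw [xiVal_eq_zero_of_lt q y hk, mul_zero]
    refine (sum_eq_zero fun ij _ => ?_).symm
    rw [xiVal_eq_zero_of_lt q y (by lia), mul_zero]
  · obtain ⟨r, rfl⟩ := Nat.exists_eq_add_of_le hk
    rw [xiVal, mul_assoc _ _ (gbinomAt _ _ _), pow_choose_two_mul_gbinomAt_add, mul_sum, sum_mul]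
    refine sum_congr rfl fun ⟨i, j⟩ hij => ?_
    obtain rfl : i + j = n := mem_antidiagonal.mp hij
    have trinomial := gbinomAt_add_mul_gbinomAt_add q m r j
    have neg_y_pow : (-y) ^ i = (-1) ^ i * y ^ i := neg_pow y i
    simp only [xiVal, add_choose_two, pow_add, pow_mul, neg_y_pow]
    linear_combination (-((-1) ^ i * y ^ i * (-y) ^ j * (-y) ^ m * q ^ i.choose 2 *
      q ^ j.choose 2 * q ^ m.choose 2 * (q ^ m) ^ j * gbinomAt q m i)) * trinomial

/-- The linear map `ξ^{[n]} ↦ xiVal q y n`. -/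
noncomputable def dpEval : (ℕ →₀ A) →ₗ[A] ℕ → A :=
  Finsupp.linearCombination A (xiVal q y)

theorem dpEval_single (n : ℕ) (a : A) :
    dpEval q y (Finsupp.single n a) = a • xiVal q y n :=
  Finsupp.linearCombination_single A a n

theorem dpEval_apply (f : ℕ →₀ A) (k : ℕ) :
    dpEval q y f k = ∑ n ∈ f.support, f n * xiVal q y n k := by
  simp [dpEval, Finsupp.linearCombination_apply, Finsupp.sum]

theorem dpEval_xiMul (n m : ℕ) : dpEval q y (xiMul q y n m) = xiVal q y n * xiVal q y m := by
  ext k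
  simp [dpEval_single, xiMul_eq_sum_antidiagonal, xiVal_mul_xiVal_apply, -Finsupp.single_mul]

theorem dpEval_dpMul (f g : ℕ →₀ A) :
    dpEval q y (dpMul q y f g) = dpEval q y f * dpEval q y g := by
  have eval_comp_mul : (dpMulₗ q y).compr₂ (dpEval q y) =
      (LinearMap.mul A (ℕ → A)).compl₁₂ (dpEval q y) (dpEval q y) := by
    ext1 n; ext1; ext1 m; ext1
    simp [dpMulₗ_single_single, dpEval_single, dpEval_xiMul]
  simpa [dpMulₗ_apply] using LinearMap.congr_fun₂ eval_comp_mul f g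

variable {q y}

theorem dpEval_injective (hq : IsRegular q) (hy : IsRegular y) :
    Function.Injective (dpEval q y) := by
  rw [injective_iff_map_eq_zero]
  intro f hf
  ext n
  induction n using Nat.strong_induction_on with
  | _ n ih =>
    have eval_n : dpEval q y f n = f n * xiVal q y n n := by
      rw [dpEval_apply, sum_eq_single n]
      · intro j _ hj
        rcases lt_or_gt_of_ne hj with hlt | hgt
        · simp [ih j hlt]
        · rw [xiVal_eq_zero_of_lt q y hgt, mul_zero]
      · simp +contextual
    have diagonal : IsRegular (xiVal q y n n) := by
      simpa [xiVal] using ((isUnit_neg_one.isRegular.mul hy).pow n).mul (hq.pow (n.choose 2))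
    exact diagonal.right.mul_right_eq_zero_iff.mp (eval_n.symm.trans (congrFun hf n))

end Evaluation

section RingLaws

universe u

variable {A : Type u} [CommRing A] (q y : A)

theorem exists_isRegular_lift :
    ∃ (R : Type u) (_ : CommRing R) (φ : R →+* A) (u v : R), Function.Surjective φ ∧
      IsRegular u ∧ IsRegular v ∧ φ u = q ∧ φ v = y :=
  ⟨MvPolynomial (Fin 2) A, inferInstance, MvPolynomial.eval ![q, y], .X 0, .X 1,
    fun a => ⟨.C a, by simp⟩, MvPolynomial.isRegular_X, MvPolynomial.isRegular_X, by simp, by simp⟩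

theorem dpMul_comm (f g : ℕ →₀ A) : dpMul q y f g = dpMul q y g f := by
  obtain ⟨R, _, φ, u, v, hφ, hu, hv, rfl, rfl⟩ := exists_isRegular_lift q y
  obtain ⟨f, rfl⟩ := Finsupp.mapRange_surjective φ (map_zero φ) hφ f
  obtain ⟨g, rfl⟩ := Finsupp.mapRange_surjective φ (map_zero φ) hφ g
  have comm_lift : dpMul u v f g = dpMul u v g f :=
    dpEval_injective hu hv (by simp only [dpEval_dpMul, mul_comm])
  simpa [mapRange_dpMul] using congrArg (Finsupp.mapRange φ (map_zero φ)) comm_lift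

theorem dpMul_assoc (f g h : ℕ →₀ A) :
    dpMul q y (dpMul q y f g) h = dpMul q y f (dpMul q y g h) := by
  obtain ⟨R, _, φ, u, v, hφ, hu, hv, rfl, rfl⟩ := exists_isRegular_lift q y
  obtain ⟨f, rfl⟩ := Finsupp.mapRange_surjective φ (map_zero φ) hφ f
  obtain ⟨g, rfl⟩ := Finsupp.mapRange_surjective φ (map_zero φ) hφ g
  obtain ⟨h, rfl⟩ := Finsupp.mapRange_surjective φ (map_zero φ) hφ h
  have assoc_lift : dpMul u v (dpMul u v f g) h = dpMul u v f (dpMul u v g h) :=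
    dpEval_injective hu hv (by simp only [dpEval_dpMul, mul_assoc])
  simpa [mapRange_dpMul] using congrArg (Finsupp.mapRange φ (map_zero φ)) assoc_lift

end RingLaws

/-- the `A`-bilinear multiplication determined on basis elements by
`ξ^{[n]}·ξ^{[m]} = Σ_{i=0}^{min(m,n)} (−1)^i q^{i(i−1)/2} C(m+n−i,m)_q C(m,i)_q y^i ξ^{[m+n−i]}`
is bilinear, associative and commutative with unit `ξ^{[0]}`, making the free module
`ℕ →₀ A` a commutative unital `A`-algebra; moreover for every `n` the `A`-submodule
spanned by `{ξ^{[k]} : k > n}` is an ideal. -/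
theorem twisted_divided_power_algebra_structure {A : Type*} [CommRing A] (q y : A) :
    -- on basis elements the multiplication is the prescribed one
    (∀ n m : ℕ, dpMul q y (Finsupp.single n (1 : A)) (Finsupp.single m 1) = xiMul q y n m) ∧
    -- bilinearity
    (∀ f g h : ℕ →₀ A, dpMul q y (f + g) h = dpMul q y f h + dpMul q y g h) ∧
    (∀ f g h : ℕ →₀ A, dpMul q y f (g + h) = dpMul q y f g + dpMul q y f h) ∧
    (∀ (a : A) (f g : ℕ →₀ A), dpMul q y (a • f) g = a • dpMul q y f g) ∧
    (∀ (a : A) (f g : ℕ →₀ A), dpMul q y f (a • g) = a • dpMul q y f g) ∧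
    -- associativity
    (∀ f g h : ℕ →₀ A, dpMul q y (dpMul q y f g) h = dpMul q y f (dpMul q y g h)) ∧
    -- commutativity
    (∀ f g : ℕ →₀ A, dpMul q y f g = dpMul q y g f) ∧
    -- `ξ^{[0]}` is a unit element
    (∀ f : ℕ →₀ A, dpMul q y (Finsupp.single 0 1) f = f) ∧
    (∀ f : ℕ →₀ A, dpMul q y f (Finsupp.single 0 1) = f) ∧
    -- for every `n`, the span of `{ξ^{[k]} : k > n}` is an ideal
    (∀ n : ℕ, ∀ f g : ℕ →₀ A,
      g ∈ Submodule.span A {h : ℕ →₀ A | ∃ k > n, h = Finsupp.single k 1} →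
      dpMul q y f g ∈ Submodule.span A {h : ℕ →₀ A | ∃ k > n, h = Finsupp.single k 1}) := by
  refine ⟨fun n m => ?_, fun f g h => ?_, fun f g h => ?_, fun a f g => ?_, fun a f g => ?_,
    dpMul_assoc q y, dpMul_comm q y, single_zero_one_dpMul q y, dpMul_single_zero_one q y,
    fun n f g hg => ?_⟩
  · rw [← dpMulₗ_apply, dpMulₗ_single_single, one_smul, one_smul]
  · simp only [← dpMulₗ_apply, LinearMap.map_add₂]
  · simp only [← dpMulₗ_apply, map_add]
  · simp only [← dpMulₗ_apply, LinearMap.map_smul₂]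
  · simp only [← dpMulₗ_apply, map_smul]
  · have span_eq : Submodule.span A {h : ℕ →₀ A | ∃ k > n, h = Finsupp.single k 1} =
        Finsupp.supported A A (Set.Ioi n) := by
      rw [Finsupp.supported_eq_span_single]
      simp [Set.image, eq_comm]
    rw [span_eq] at hg ⊢
    exact dpMul_mem_supported q y (isUpperSet_Ioi n) f hg
end
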